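/- arXiv:1905.00605 — 2 statements merged into one kernel-verified Lean document; each statement's English description precedes it below -/
import Mathlib

section
/- Let X be a real Banach space that is uniformly convex and uniformly smooth, and let M, N be closed linear subspaces of X with closed sum M + N. Then for every x ∈ X, the sequence defined by x₀ = x, x_{2n+1} = (I − P_M)x_{2n}, x_{2n} = (I − P_N)x_{2n−1} converges in norm to (I − P_{M+N})x. -/
open Filter Topology

noncomputable section

/-- The modulus of convexity of a normed space `X`. -/
def modConvex (X : Type*) [NormedAddCommGroup X] (ε : ℝ) : ℝ :=
  sInf {d : ℝ | ∃ x y : X, ‖x‖ = 1 ∧ ‖y‖ = 1 ∧ ε ≤ ‖x - y‖ ∧ d = 1 - ‖x + y‖ / 2}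

/-- The modulus of smoothness of a normed space `X`. -/
def modSmooth (X : Type*) [NormedAddCommGroup X] [NormedSpace ℝ X] (τ : ℝ) : ℝ :=
  sSup {d : ℝ | ∃ x y : X, ‖x‖ = 1 ∧ ‖y‖ = 1 ∧ d = (‖x + τ • y‖ + ‖x - τ • y‖) / 2 - 1}

/-- `X` is uniformly convex: the modulus of convexity is positive for positive ε. -/
def UnifConvex (X : Type*) [NormedAddCommGroup X] : Prop :=
  ∀ ε : ℝ, 0 < ε → ε ≤ 2 → 0 < modConvex X ε

/-- `X` is uniformly smooth: `ρ_X(τ)/τ → 0` as `τ → 0⁺`. -/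
def UnifSmooth (X : Type*) [NormedAddCommGroup X] [NormedSpace ℝ X] : Prop :=
  Tendsto (fun τ => modSmooth X τ / τ) (𝓝[>] (0 : ℝ)) (𝓝 0)

/-- `X` is uniformly convex of power type `ρ`. -/
def PowerConvex (X : Type*) [NormedAddCommGroup X] (ρ : ℝ) : Prop :=
  ∃ c > (0 : ℝ), ∀ ε ∈ Set.Icc (0 : ℝ) 2, c * ε ^ ρ ≤ modConvex X ε

/-- `X` is uniformly smooth of power type `σ` (with `σ > 1`). -/
def PowerSmooth (X : Type*) [NormedAddCommGroup X] [NormedSpace ℝ X] (σ : ℝ) : Prop :=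
  1 < σ ∧ ∃ C > (0 : ℝ), ∀ τ ∈ Set.Icc (0 : ℝ) 1, modSmooth X τ ≤ C * τ ^ σ

variable {X : Type*} [NormedAddCommGroup X] [NormedSpace ℝ X]

/-- The duality mapping `j_p`, the Fréchet derivative of `x ↦ (1/p)‖x‖^p`. -/
def dualityMap (p : ℝ) (x : X) : X →L[ℝ] ℝ :=
  fderiv ℝ (fun y : X => 1 / p * ‖y‖ ^ p) x

/-- The Bregman distance `D_p(x, y)`. -/
def bregmanDist (p : ℝ) (x y : X) : ℝ :=
  1 / p * ‖x‖ ^ p - 1 / p * ‖y‖ ^ p - dualityMap p y (x - y)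

/-- The Bregman projection of `x` onto the set `S`: the minimizer of `m ↦ D_p(m, x)` over `S`. -/
def bregmanProj (p : ℝ) (S : Set X) (x : X) : X :=
  letI : Nonempty X := ⟨x⟩
  Classical.epsilon fun y => y ∈ S ∧ ∀ m ∈ S, bregmanDist p y x ≤ bregmanDist p m x

/-- The Bregman distance `D_p(S, x)` from the point `x` to the set `S`. -/
def bregmanDistSet (p : ℝ) (S : Set X) (x : X) : ℝ :=
  bregmanDist p (bregmanProj p S x) x

/-- The metric projection of `x` onto the set `S`: the point of `S` nearest to `x`. -/
def metricProj (S : Set X) (x : X) : X :=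
  letI : Nonempty X := ⟨x⟩
  Classical.epsilon fun y => y ∈ S ∧ ∀ m ∈ S, ‖x - y‖ ≤ ‖x - m‖

/-!
Replacing a point `u` by its residual `v = u - P_K u` makes `v` Birkhoff orthogonal to
`K ∋ u - v`, so `‖v‖ ≤ ‖u‖` and `2‖v‖ ≤ ‖u + v‖`. Hence the norms of the iterates decrease to
some `r`, and uniform convexity forces consecutive iterates to be asymptotically equal.

Hahn–Banach turns `y ⊥ K` into a supporting functional of `y` that vanishes on `K`. Let `f` and
`g` be such functionals for consecutive iterates `y ⊥ M` and `y' ⊥ N`. Uniform smoothness makes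
the duality mapping uniformly continuous away from `0`, so `f - g → 0`. If `z = a - P_{M+N} a`,
then `y - z` splits as `m + n` with `m ∈ M`, `n ∈ N` bounded (open mapping theorem), and
`‖y‖ - ‖z‖ ≤ f (y - z) = f n = (f - g) n → 0`. So `r = ‖z‖`, and since `z ⊥ M + N`, uniform
convexity again gives convergence of the iterates to `z`.
-/

section UniformConvexity

theorem modConvex_le {X : Type*} [NormedAddCommGroup X] {x y : X} {ε : ℝ}
    (hx : ‖x‖ = 1) (hy : ‖y‖ = 1) (hxy : ε ≤ ‖x - y‖) : modConvex X ε ≤ 1 - ‖x + y‖ / 2 := by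
  refine csInf_le ⟨0, ?_⟩ ⟨x, y, hx, hy, hxy, rfl⟩
  rintro d ⟨u, v, hu, hv, -, rfl⟩
  linarith [norm_add_le u v]

theorem UnifConvex.uniformConvexSpace {X : Type*} [NormedAddCommGroup X] (h : UnifConvex X) :
    UniformConvexSpace X where
  uniform_convex ε hε := by
    rcases le_or_gt ε 2 with hε2 | hε2
    · refine ⟨2 * modConvex X ε, mul_pos two_pos (h ε hε hε2), fun x hx y hy hxy => ?_⟩
      linarith [modConvex_le hx hy hxy]
    · refine ⟨1, one_pos, fun x hx y hy hxy => ?_⟩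
      linarith [norm_sub_le x y]

theorem norm_div_norm_smul_le {r : ℝ} (hr : 0 ≤ r) (x : X) : ‖(r / ‖x‖) • x‖ ≤ r := by
  rw [norm_smul_of_nonneg (by positivity)]
  rcases eq_or_ne ‖x‖ 0 with hx | hx
  · simpa [hx] using hr
  · exact (div_mul_cancel₀ r hx).le

theorem norm_sub_div_norm_smul_le (r : ℝ) (x : X) : ‖x - (r / ‖x‖) • x‖ ≤ |‖x‖ - r| := by
  rcases eq_or_ne x 0 with rfl | hx
  · simp
  · have hx' : ‖x‖ ≠ 0 := norm_ne_zero_iff.2 hx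
    have hfactor : x - (r / ‖x‖) • x = (1 - r / ‖x‖) • x := by module
    rw [hfactor, norm_smul, Real.norm_eq_abs, ← abs_norm x, ← abs_mul, abs_norm]
    field_simp
    exact le_rfl

variable {ι : Type*} {l : Filter ι} {u v : ι → X} {w : ι → ℝ} {r : ℝ}

theorem tendsto_sub_div_norm_smul (hu : Tendsto (fun i => ‖u i‖) l (𝓝 r)) :
    Tendsto (fun i => u i - (r / ‖u i‖) • u i) l (𝓝 0) := by
  refine squeeze_zero_norm (fun i => norm_sub_div_norm_smul_le r (u i)) ?_
  simpa using (hu.sub_const r).abs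

theorem tendsto_sub_of_norm_le_of_le_norm_add [UniformConvexSpace X] (hu : ∀ i, ‖u i‖ ≤ r)
    (hv : ∀ i, ‖v i‖ ≤ r) (hw : Tendsto w l (𝓝 (2 * r)))
    (hwuv : ∀ i, w i ≤ ‖u i + v i‖) : Tendsto (fun i => u i - v i) l (𝓝 0) := by
  rw [NormedAddGroup.tendsto_nhds_zero]
  intro ε hε
  obtain ⟨δ, hδ, hgap⟩ := exists_forall_closed_ball_dist_add_le_two_mul_sub X hε r
  filter_upwards [hw.eventually_const_lt (sub_lt_self (2 * r) hδ)] with i hi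
  by_contra! hfar
  linarith [hgap (hu i) (hv i) hfar, hwuv i]

theorem tendsto_sub_of_tendsto_norm_of_le_norm_add [UniformConvexSpace X]
    (hu : Tendsto (fun i => ‖u i‖) l (𝓝 r)) (hv : Tendsto (fun i => ‖v i‖) l (𝓝 r))
    (hw : Tendsto w l (𝓝 (2 * r))) (hwuv : ∀ i, w i ≤ ‖u i + v i‖) :
    Tendsto (fun i => u i - v i) l (𝓝 0) := by
  rcases l.eq_or_neBot with rfl | _
  · exact tendsto_bot
  have hr : 0 ≤ r := ge_of_tendsto' hu fun i => norm_nonneg (u i)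
  set u' : ι → X := fun i => (r / ‖u i‖) • u i
  set v' : ι → X := fun i => (r / ‖v i‖) • v i
  have huu' : Tendsto (fun i => u i - u' i) l (𝓝 0) := tendsto_sub_div_norm_smul hu
  have hvv' : Tendsto (fun i => v i - v' i) l (𝓝 0) := tendsto_sub_div_norm_smul hv
  have hu'v' : Tendsto (fun i => u' i - v' i) l (𝓝 0) := by
    refine tendsto_sub_of_norm_le_of_le_norm_add
      (w := fun i => w i - (‖u i - u' i‖ + ‖v i - v' i‖))
      (fun i => norm_div_norm_smul_le hr (u i)) (fun i => norm_div_norm_smul_le hr (v i))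
      (by simpa using hw.sub (huu'.norm.add hvv'.norm)) fun i => ?_
    rw [sub_le_iff_le_add']
    calc
      w i ≤ ‖u i + v i‖ := hwuv i
      _ = ‖(u i - u' i) + (v i - v' i) + (u' i + v' i)‖ := by congr 1; abel
      _ ≤ ‖u i - u' i‖ + ‖v i - v' i‖ + ‖u' i + v' i‖ := norm_add₃_le
  convert (huu'.add hu'v').sub hvv' using 2
  · abel
  · simp

theorem exists_forall_norm_sub_le_of_isComplete_convex [UniformConvexSpace X] {S : Set X}
    (hcomplete : IsComplete S) (hconv : Convex ℝ S) (hne : S.Nonempty) (x : X) :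
    ∃ y ∈ S, ∀ m ∈ S, ‖x - y‖ ≤ ‖x - m‖ := by
  set r := Metric.infDist x S with hr
  have hr_le : ∀ m ∈ S, r ≤ ‖x - m‖ := fun m hm =>
    dist_eq_norm x m ▸ Metric.infDist_le_dist_of_mem hm
  obtain ⟨y, hyS, hy⟩ : ∃ y : ℕ → X, (∀ n, y n ∈ S) ∧
      Tendsto (fun n => ‖x - y n‖) atTop (𝓝 r) := by
    have : Nonempty S := hne.to_subtype
    obtain ⟨d, -, hd, hdS⟩ := exists_seq_tendsto_sInf
      (Set.range_nonempty fun y : S => dist x y)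
      ⟨0, Set.forall_mem_range.2 fun y => dist_nonneg⟩
    choose y hy using hdS
    refine ⟨fun n => y n, fun n => (y n).2, ?_⟩
    simp only [← dist_eq_norm, hy]
    rwa [hr, Metric.infDist_eq_iInf]
  have hcauchy : CauchySeq y := by
    rw [cauchySeq_iff_tendsto_dist_atTop_0, ← prod_atTop_atTop_eq]
    have hdiff := tendsto_sub_of_tendsto_norm_of_le_norm_add (hy.comp tendsto_fst)
      (hy.comp tendsto_snd) tendsto_const_nhds fun p : ℕ × ℕ => ?_
    · simpa [dist_eq_norm, norm_sub_rev] using hdiff.norm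
    · have hmid := hr_le _ (hconv.midpoint_mem (hyS p.1) (hyS p.2))
      have : (x - y p.1) + (x - y p.2) = (2 : ℝ) • (x - midpoint ℝ (y p.1) (y p.2)) := by
        rw [midpoint_eq_smul_add, invOf_eq_inv]
        module
      rw [this, norm_smul, Real.norm_ofNat]
      gcongr
  obtain ⟨z, hzS, hz⟩ := cauchySeq_tendsto_of_isComplete hcomplete hyS hcauchy
  have hxz : ‖x - z‖ = r := tendsto_nhds_unique (tendsto_const_nhds.sub hz).norm hy
  exact ⟨z, hzS, fun m hm => hxz ▸ hr_le m hm⟩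

theorem metricProj_spec [UniformConvexSpace X] {S : Set X}
    (hcomplete : IsComplete S) (hconv : Convex ℝ S) (hne : S.Nonempty) (x : X) :
    metricProj S x ∈ S ∧ ∀ m ∈ S, ‖x - metricProj S x‖ ≤ ‖x - m‖ :=
  Classical.epsilon_spec (exists_forall_norm_sub_le_of_isComplete_convex hcomplete hconv hne x)

end UniformConvexity

section BirkhoffOrthogonality

/-- Birkhoff–James orthogonality `x ⊥ y`, a relation that is not symmetric in general. -/
def BirkhoffOrthogonal (x y : X) : Prop :=
  ∀ t : ℝ, ‖x‖ ≤ ‖x + t • y‖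

/-- `f` is a supporting functional of `x`. The bound `‖f‖ ≤ 1` rather than `‖f‖ = 1` lets every
point, including `0`, have one in every space. -/
structure IsSupporting (f : StrongDual ℝ X) (x : X) : Prop where
  norm_le_one : ‖f‖ ≤ 1
  apply_self : f x = ‖x‖

/-- `y` is the residual `x - P_K x` of a best approximation of `x` in `K`, expressed through
orthogonality instead of minimality. -/
structure IsResidual (K : Submodule ℝ X) (x y : X) : Prop where
  sub_mem : x - y ∈ K
  birkhoffOrthogonal : ∀ k ∈ K, BirkhoffOrthogonal y k

variable {K : Submodule ℝ X}

theorem BirkhoffOrthogonal.norm_le {x y : X} (h : BirkhoffOrthogonal y (x - y)) : ‖y‖ ≤ ‖x‖ := by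
  simpa using h 1

theorem BirkhoffOrthogonal.two_mul_norm_le {x y : X} (h : BirkhoffOrthogonal y (x - y)) :
    2 * ‖y‖ ≤ ‖x + y‖ := by
  have hmid : x + y = (2 : ℝ) • (y + (1 / 2 : ℝ) • (x - y)) := by module
  rw [hmid, norm_smul, Real.norm_ofNat]
  gcongr
  exact h (1 / 2)

theorem tendsto_sub_of_birkhoffOrthogonal [UniformConvexSpace X] {ι : Type*} {l : Filter ι}
    {x y : ι → X} {r : ℝ} (hx : Tendsto (fun i => ‖x i‖) l (𝓝 r))
    (hy : Tendsto (fun i => ‖y i‖) l (𝓝 r)) (h : ∀ i, BirkhoffOrthogonal (y i) (x i - y i)) :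
    Tendsto (fun i => x i - y i) l (𝓝 0) :=
  tendsto_sub_of_tendsto_norm_of_le_norm_add hx hy (hy.const_mul 2) fun i => (h i).two_mul_norm_le

theorem exists_tendsto_norm_and_tendsto_sub_succ [UniformConvexSpace X] {x : ℕ → X}
    (h : ∀ n, BirkhoffOrthogonal (x (n + 1)) (x n - x (n + 1))) :
    ∃ r, Tendsto (fun n => ‖x n‖) atTop (𝓝 r) ∧
      Tendsto (fun n => x n - x (n + 1)) atTop (𝓝 0) := by
  have hanti : Antitone fun n => ‖x n‖ := antitone_nat_of_succ_le fun n => (h n).norm_le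
  have hlim := tendsto_atTop_ciInf hanti ⟨0, Set.forall_mem_range.2 fun n => norm_nonneg (x n)⟩
  exact ⟨_, hlim, tendsto_sub_of_birkhoffOrthogonal hlim
    ((tendsto_add_atTop_iff_nat 1).2 hlim) h⟩

theorem exists_isSupporting_of_birkhoffOrthogonal {y : X}
    (h : ∀ k ∈ K, BirkhoffOrthogonal y k) :
    ∃ f : StrongDual ℝ X, IsSupporting f y ∧ ∀ k ∈ K, f k = 0 := by
  have hnorm : ‖K.mkQ y‖ = ‖y‖ := by
    refine le_antisymm (Submodule.Quotient.norm_mk_le K y) (le_of_forall_pos_lt_add fun ε hε => ?_)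
    obtain ⟨m, hm, hlt⟩ := Submodule.Quotient.norm_mk_lt (K.mkQ y) hε
    have hmem : m - y ∈ K := (Submodule.Quotient.eq K).1 hm
    exact (h _ hmem).norm_le.trans_lt hlt
  obtain ⟨g, hg, hgy⟩ := exists_dual_vector'' ℝ (K.mkQ y)
  refine ⟨g.comp K.mkQL, ⟨ContinuousLinearMap.opNorm_le_bound _ zero_le_one fun u => ?_,
    hgy.trans hnorm⟩, fun k hk => ?_⟩
  · exact g.le_of_opNorm_le_of_le hg (Submodule.Quotient.norm_mk_le K u)
  · have hk0 : K.mkQ k = 0 := (Submodule.Quotient.mk_eq_zero K).2 hk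
    exact (congrArg g hk0).trans (map_zero g)

theorem isResidual_sub_metricProj [UniformConvexSpace X]
    (hK : IsComplete (K : Set X)) (x : X) : IsResidual K x (x - metricProj (K : Set X) x) := by
  obtain ⟨hmem, hmin⟩ := metricProj_spec hK K.convex K.nonempty x
  refine ⟨by simpa using hmem, fun k hk t => ?_⟩
  convert hmin _ (K.sub_mem hmem (K.smul_mem t hk)) using 2
  abel

end BirkhoffOrthogonality

section UniformSmoothness

theorem le_modSmooth {x y : X} (τ : ℝ) (hx : ‖x‖ = 1) (hy : ‖y‖ = 1) :
    (‖x + τ • y‖ + ‖x - τ • y‖) / 2 - 1 ≤ modSmooth X τ := by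
  refine le_csSup ⟨|τ|, ?_⟩ ⟨x, y, hx, hy, rfl⟩
  rintro d ⟨u, v, hu, hv, rfl⟩
  have hτv : ‖τ • v‖ = |τ| := by rw [norm_smul, hv, mul_one, Real.norm_eq_abs]
  linarith [norm_add_le u (τ • v), norm_sub_le u (τ • v)]

theorem norm_add_smul_add_norm_sub_smul_le (τ : ℝ) (x : X) {v : X} (hv : ‖v‖ = 1) :
    ‖x + (τ * ‖x‖) • v‖ + ‖x - (τ * ‖x‖) • v‖ ≤ 2 * ‖x‖ * (1 + modSmooth X τ) := by
  rcases eq_or_ne x 0 with rfl | hx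
  · simp
  have hx' : ‖x‖ ≠ 0 := norm_ne_zero_iff.2 hx
  obtain ⟨u, hu, hxu⟩ : ∃ u : X, ‖u‖ = 1 ∧ x = ‖x‖ • u :=
    ⟨‖x‖⁻¹ • x, norm_smul_inv_norm hx, (smul_inv_smul₀ hx' x).symm⟩
  have hadd : ‖x + (τ * ‖x‖) • v‖ = ‖x‖ * ‖u + τ • v‖ := by
    rw [← norm_smul_of_nonneg (norm_nonneg x), smul_add, ← hxu, smul_smul, mul_comm]
  have hsub : ‖x - (τ * ‖x‖) • v‖ = ‖x‖ * ‖u - τ • v‖ := by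
    rw [← norm_smul_of_nonneg (norm_nonneg x), smul_sub, ← hxu, smul_smul, mul_comm]
  calc
    _ = ‖x‖ * (‖u + τ • v‖ + ‖u - τ • v‖) := by rw [hadd, hsub, mul_add]
    _ ≤ ‖x‖ * (2 * (1 + modSmooth X τ)) := by gcongr; linarith [le_modSmooth τ hu hv]
    _ = _ := by ring

theorem IsSupporting.apply_le {f : StrongDual ℝ X} {x : X} (hf : IsSupporting f x) (u : X) :
    f u ≤ ‖u‖ :=
  (le_abs_self _).trans (f.le_of_opNorm_le_of_le hf.norm_le_one le_rfl |>.trans_eq (one_mul _))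

theorem IsSupporting.sub_apply_le {f g : StrongDual ℝ X} {x y : X} (hf : IsSupporting f x)
    (hg : IsSupporting g y) (h : X) :
    (f - g) h ≤ ‖x + h‖ + ‖x - h‖ - 2 * ‖x‖ + 2 * ‖x - y‖ := by
  have hfx : ‖x‖ + f h ≤ ‖x + h‖ := by
    rw [← hf.apply_self, ← map_add]
    exact hf.apply_le _
  have hgx : g x - g h ≤ ‖x - h‖ := by
    rw [← map_sub]
    exact hg.apply_le _
  have hgy : ‖y‖ - g x ≤ ‖x - y‖ := by
    rw [← hg.apply_self, ← map_sub, norm_sub_rev]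
    exact hg.apply_le _
  rw [sub_apply]
  linarith [norm_le_norm_add_norm_sub' x y]

theorem IsSupporting.norm_sub_le {f g : StrongDual ℝ X} {x y : X} (hf : IsSupporting f x)
    (hg : IsSupporting g y) (hx : x ≠ 0) {τ : ℝ} (hτ : 0 < τ) :
    ‖f - g‖ ≤ 2 * (modSmooth X τ / τ) + 2 * ‖x - y‖ / (τ * ‖x‖) := by
  have hs : 0 < τ * ‖x‖ := mul_pos hτ (norm_pos_iff.2 hx)
  have hunit : ∀ v : X, ‖v‖ = 1 →
      (f - g) v ≤ 2 * (modSmooth X τ / τ) + 2 * ‖x - y‖ / (τ * ‖x‖) := fun v hv => by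
    have hsv : τ * ‖x‖ * (f - g) v ≤ 2 * ‖x‖ * modSmooth X τ + 2 * ‖x - y‖ := by
      rw [← smul_eq_mul (a := τ * ‖x‖), ← map_smul]
      linarith [hf.sub_apply_le hg ((τ * ‖x‖) • v), norm_add_smul_add_norm_sub_smul_le τ x hv]
    rw [mul_comm, ← le_div_iff₀ hs] at hsv
    refine hsv.trans_eq ?_
    field_simp
  have habs : ∀ v : X, ‖v‖ = 1 →
      ‖(f - g) v‖ ≤ 2 * (modSmooth X τ / τ) + 2 * ‖x - y‖ / (τ * ‖x‖) := fun v hv => by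
    refine abs_le'.2 ⟨hunit v hv, ?_⟩
    rw [← map_neg]
    exact hunit (-v) (by rwa [norm_neg])
  exact ContinuousLinearMap.opNorm_le_of_unit_norm
    ((norm_nonneg _).trans (habs _ (norm_smul_inv_norm (𝕜 := ℝ) hx))) habs

theorem UnifSmooth.tendsto_sub_of_isSupporting (h : UnifSmooth X) {ι : Type*} {l : Filter ι}
    {x y : ι → X} {f g : ι → StrongDual ℝ X} {r : ℝ} (hf : ∀ i, IsSupporting (f i) (x i))
    (hg : ∀ i, IsSupporting (g i) (y i)) (hx : Tendsto (fun i => ‖x i‖) l (𝓝 r)) (hr : r ≠ 0)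
    (hxy : Tendsto (fun i => x i - y i) l (𝓝 0)) : Tendsto (fun i => f i - g i) l (𝓝 0) := by
  rw [NormedAddGroup.tendsto_nhds_zero]
  intro ε hε
  obtain ⟨τ, hτε, hτ⟩ : ∃ τ, modSmooth X τ / τ < ε / 4 ∧ 0 < τ :=
    ((h.eventually_lt_const (by positivity)).and self_mem_nhdsWithin).exists
  have hquot : Tendsto (fun i => 2 * ‖x i - y i‖ / (τ * ‖x i‖)) l (𝓝 0) := by
    simpa [Pi.div_def] using (hxy.norm.const_mul 2).div (hx.const_mul τ) (mul_ne_zero hτ.ne' hr)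
  filter_upwards [hquot.eventually_lt_const (half_pos hε), hx.eventually_ne hr] with i hi hxi
  linarith [(hf i).norm_sub_le (hg i) (norm_ne_zero_iff.1 hxi) hτ]

end UniformSmoothness

section AlternatingResiduals

variable {M N : Submodule ℝ X}

theorem exists_add_eq_norm_le_of_isComplete_sup (hM : IsComplete (M : Set X))
    (hN : IsComplete (N : Set X)) (hMN : IsComplete ((M ⊔ N : Submodule ℝ X) : Set X)) :
    ∃ C > 0, ∀ u ∈ M ⊔ N, ∃ m ∈ M, ∃ n ∈ N, m + n = u ∧ ‖m‖ ≤ C * ‖u‖ ∧ ‖n‖ ≤ C * ‖u‖ := by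
  have := hM.completeSpace_coe
  have := hN.completeSpace_coe
  have := hMN.completeSpace_coe
  let add : (M × N) →L[ℝ] (M ⊔ N : Submodule ℝ X) :=
    (M.subtypeL.coprod N.subtypeL).codRestrict (M ⊔ N) fun p =>
      Submodule.add_mem_sup p.1.2 p.2.2
  have hsurj : Function.Surjective add := by
    rintro ⟨u, hu⟩
    obtain ⟨m, hm, n, hn, rfl⟩ := Submodule.mem_sup.1 hu
    exact ⟨(⟨m, hm⟩, ⟨n, hn⟩), rfl⟩
  obtain ⟨C, hC, hpre⟩ := add.exists_preimage_norm_le hsurj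
  refine ⟨C, hC, fun u hu => ?_⟩
  obtain ⟨p, hp, hpC⟩ := hpre ⟨u, hu⟩
  exact ⟨p.1, p.1.2, p.2, p.2.2, congrArg Subtype.val hp, (norm_fst_le p).trans hpC,
    (norm_snd_le p).trans hpC⟩

theorem UnifSmooth.le_norm_of_birkhoffOrthogonal (h : UnifSmooth X) (hM : IsComplete (M : Set X))
    (hN : IsComplete (N : Set X)) (hMN : IsComplete ((M ⊔ N : Submodule ℝ X) : Set X))
    {ι : Type*} {l : Filter ι} [l.NeBot] {y y' : ι → X} {z : X} {r : ℝ}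
    (hy : ∀ i, ∀ m ∈ M, BirkhoffOrthogonal (y i) m)
    (hy' : ∀ i, ∀ n ∈ N, BirkhoffOrthogonal (y' i) n)
    (hyy' : Tendsto (fun i => y i - y' i) l (𝓝 0)) (hyz : ∀ i, y i - z ∈ M ⊔ N)
    (hr : Tendsto (fun i => ‖y i‖) l (𝓝 r)) : r ≤ ‖z‖ := by
  rcases eq_or_ne r 0 with rfl | hr0
  · exact norm_nonneg z
  choose f hf hfM using fun i => exists_isSupporting_of_birkhoffOrthogonal (hy i)
  choose g hg hgN using fun i => exists_isSupporting_of_birkhoffOrthogonal (hy' i)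
  have hfg : Tendsto (fun i => f i - g i) l (𝓝 0) :=
    h.tendsto_sub_of_isSupporting hf hg hr hr0 hyy'
  obtain ⟨C, hC, hsplit⟩ := exists_add_eq_norm_le_of_isComplete_sup hM hN hMN
  have hbound : ∀ i, ‖y i‖ ≤ ‖z‖ + ‖f i - g i‖ * (C * (‖y i‖ + ‖z‖)) := fun i => by
    obtain ⟨m, hm, n, hn, hmn, -, hnC⟩ := hsplit _ (hyz i)
    calc
      ‖y i‖ = f i z + f i (y i - z) := by rw [map_sub, add_sub_cancel, (hf i).apply_self]
      _ = f i z + (f i - g i) n := by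
        rw [← hmn, map_add, hfM i m hm, sub_apply, hgN i n hn, zero_add, sub_zero]
      _ ≤ ‖z‖ + ‖f i - g i‖ * ‖n‖ :=
        add_le_add ((hf i).apply_le z) ((le_abs_self _).trans ((f i - g i).le_opNorm n))
      _ ≤ ‖z‖ + ‖f i - g i‖ * (C * (‖y i‖ + ‖z‖)) := by
        grw [hnC, norm_sub_le (y i) z]
  refine le_of_tendsto_of_tendsto' hr ?_ hbound
  simpa using (hfg.norm.mul ((hr.add_const ‖z‖).const_mul C)).const_add ‖z‖

theorem tendsto_of_alternating_isResidual [UniformConvexSpace X] (hsmooth : UnifSmooth X)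
    (hM : IsComplete (M : Set X)) (hN : IsComplete (N : Set X))
    (hMN : IsComplete ((M ⊔ N : Submodule ℝ X) : Set X)) {x : ℕ → X} {z : X}
    (hxM : ∀ n, IsResidual M (x (2 * n)) (x (2 * n + 1)))
    (hxN : ∀ n, IsResidual N (x (2 * n + 1)) (x (2 * n + 2)))
    (hz : IsResidual (M ⊔ N) (x 0) z) : Tendsto x atTop (𝓝 z) := by
  have hstep : ∀ n, x n - x (n + 1) ∈ M ⊔ N ∧
      BirkhoffOrthogonal (x (n + 1)) (x n - x (n + 1)) := fun n => by
    rcases n.even_or_odd' with ⟨k, rfl | rfl⟩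
    · exact ⟨Submodule.mem_sup_left (hxM k).sub_mem,
        (hxM k).birkhoffOrthogonal _ (hxM k).sub_mem⟩
    · exact ⟨Submodule.mem_sup_right (hxN k).sub_mem,
        (hxN k).birkhoffOrthogonal _ (hxN k).sub_mem⟩
  have hmem : ∀ n, x n - z ∈ M ⊔ N := fun n => by
    induction n with
    | zero => exact hz.sub_mem
    | succ n ih => simpa using sub_mem ih (hstep n).1
  have horth : ∀ n, BirkhoffOrthogonal z (x n - z) := fun n => hz.birkhoffOrthogonal _ (hmem n)
  obtain ⟨r, hr, hdiff⟩ := exists_tendsto_norm_and_tendsto_sub_succ fun n => (hstep n).2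
  have hodd : Tendsto (fun n : ℕ => 2 * n + 1) atTop atTop :=
    tendsto_atTop_mono (fun n => show n ≤ 2 * n + 1 by omega) tendsto_id
  have hrz : r = ‖z‖ := le_antisymm
    (hsmooth.le_norm_of_birkhoffOrthogonal hM hN hMN (fun n => (hxM n).birkhoffOrthogonal)
      (fun n => (hxN n).birkhoffOrthogonal) (hdiff.comp hodd) (fun n => hmem (2 * n + 1))
      (hr.comp hodd))
    (ge_of_tendsto' hr fun n => (horth n).norm_le)
  exact tendsto_sub_nhds_zero_iff.1
    (tendsto_sub_of_birkhoffOrthogonal hr (hrz ▸ tendsto_const_nhds) horth)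

end AlternatingResiduals

theorem statement16_general {X : Type*} [NormedAddCommGroup X] [NormedSpace ℝ X]
    (hconv : UnifConvex X) (hsmooth : UnifSmooth X) {M N : Submodule ℝ X}
    (hM : IsComplete (M : Set X)) (hN : IsComplete (N : Set X))
    (hMN : IsComplete ((M ⊔ N : Submodule ℝ X) : Set X)) {x : ℕ → X}
    (hodd : ∀ n, x (2 * n + 1) = x (2 * n) - metricProj (M : Set X) (x (2 * n)))
    (heven : ∀ n, x (2 * n + 2) = x (2 * n + 1) - metricProj (N : Set X) (x (2 * n + 1))) :
    Tendsto x atTop (𝓝 (x 0 - metricProj ((M ⊔ N : Submodule ℝ X) : Set X) (x 0))) := by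
  have := hconv.uniformConvexSpace
  refine tendsto_of_alternating_isResidual hsmooth hM hN hMN (fun n => ?_) (fun n => ?_)
    (isResidual_sub_metricProj hMN (x 0))
  · rw [hodd]
    exact isResidual_sub_metricProj hM _
  · rw [heven]
    exact isResidual_sub_metricProj hN _

theorem statement16 {X : Type*} [NormedAddCommGroup X] [NormedSpace ℝ X] [CompleteSpace X]
    (hconv : UnifConvex X) (hsmooth : UnifSmooth X)
    (M N : Submodule ℝ X) (hM : IsClosed (M : Set X)) (hN : IsClosed (N : Set X))
    (hMN : IsClosed ((M ⊔ N : Submodule ℝ X) : Set X))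
    (a : X) (x : ℕ → X) (hx0 : x 0 = a)
    (hodd : ∀ n : ℕ, x (2 * n + 1) = x (2 * n) - metricProj (M : Set X) (x (2 * n)))
    (heven : ∀ n : ℕ, x (2 * n + 2) = x (2 * n + 1) - metricProj (N : Set X) (x (2 * n + 1))) :
    Filter.Tendsto x Filter.atTop
      (𝓝 (a - metricProj ((M ⊔ N : Submodule ℝ X) : Set X) a)) :=
  hx0 ▸ statement16_general hconv hsmooth hM.isComplete hN.isComplete hMN.isComplete hodd heven
end
end

section
/- Let X be a real Banach space that is uniformly convex and uniformly smooth, let 1 < p < ∞ with conjugate exponent p* (1/p + 1/p* = 1), and let M be a closed linear subspace of X with annihilator M^⊥ ⊆ X*. Then for every x ∈ X, the Bregman distance in the dual space satisfies D_{p*}(M^⊥, j_p(x)) = (1/p)‖x‖^p − (1/p) dist(x,M)^p. -/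
open Filter Topology

noncomputable section

variable {X : Type*} [NormedAddCommGroup X] [NormedSpace ℝ X]

/-!
Fenchel duality. With `q = p*`, the functions `F x = ‖x‖ ^ p / p` on `X` and `G f = ‖f‖ ^ q / q` on
the dual are conjugate: `f x ≤ F x + G f` by Young's inequality, and by Hahn–Banach every `x` admits
some `f` attaining equality. If `F` is differentiable at `x`, minimality of `F - f` at `x`
identifies this `f` with `j_p x`; if `G` is differentiable at `j_p x`, minimality of `g ↦ G g - g x`
at `j_p x` gives `j_q (j_p x) = x`. Hence `D_q (g, j_p x) = F x + (G g - g x)`, and minimizing over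
`g ∈ M^⊥` is the same conjugacy on `X ⧸ M`, whose dual is `M^⊥` and where the class of `x` has norm
`dist (x, M)`.

Uniform smoothness makes the norm Fréchet differentiable away from `0`, and Lindenstrauss' duality
between the moduli makes the dual of a uniformly convex space uniformly smooth.
-/

section Moduli

lemma norm_add_le_of_le_norm_sub {E : Type*} [NormedAddCommGroup E] {ε : ℝ} {u v : E}
    (hu : ‖u‖ = 1) (hv : ‖v‖ = 1) (huv : ε ≤ ‖u - v‖) : ‖u + v‖ ≤ 2 - 2 * modConvex E ε := by
  have hbdd : BddBelow {d : ℝ | ∃ x y : E, ‖x‖ = 1 ∧ ‖y‖ = 1 ∧ ε ≤ ‖x - y‖ ∧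
      d = 1 - ‖x + y‖ / 2} := by
    refine ⟨0, ?_⟩
    rintro _ ⟨x, y, hx, hy, -, rfl⟩
    linarith [norm_add_le x y]
  have hle : modConvex E ε ≤ 1 - ‖u + v‖ / 2 := csInf_le hbdd ⟨u, v, hu, hv, huv, rfl⟩
  linarith

lemma norm_add_add_mul_norm_sub_le {E : Type*} [NormedAddCommGroup E] {ε τ : ℝ} (hε : 0 ≤ ε)
    (hτ : 0 ≤ τ) (hτε : τ ≤ modConvex E ε) {u v : E} (hu : ‖u‖ = 1) (hv : ‖v‖ = 1) :
    ‖u + v‖ + τ * ‖u - v‖ ≤ 2 + τ * ε := by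
  rcases le_total ε ‖u - v‖ with hfar | hnear
  · have hsub : τ * ‖u - v‖ ≤ τ * 2 := by gcongr; linarith [norm_sub_le u v]
    have hτε_nonneg : 0 ≤ τ * ε := by positivity
    linarith [norm_add_le_of_le_norm_sub hu hv hfar]
  · have hsub : τ * ‖u - v‖ ≤ τ * ε := by gcongr
    linarith [norm_add_le u v]

lemma two_mul_norm_le_norm_add_add_norm_sub {E : Type*} [SeminormedAddCommGroup E]
    [NormedSpace ℝ E] (x h : E) : 2 * ‖x‖ ≤ ‖x + h‖ + ‖x - h‖ := by
  have htriangle := norm_add_le (x + h) (x - h)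
  rwa [add_add_sub_cancel, ← two_smul ℝ x, norm_smul, Real.norm_two] at htriangle

lemma modSmooth_nonneg (τ : ℝ) : 0 ≤ modSmooth X τ := by
  refine Real.sSup_nonneg ?_
  rintro _ ⟨x, y, hx, -, rfl⟩
  linarith [two_mul_norm_le_norm_add_add_norm_sub x (τ • y)]

lemma le_modSmooth_s19 {u v : X} (hu : ‖u‖ = 1) (hv : ‖v‖ = 1) (τ : ℝ) :
    (‖u + τ • v‖ + ‖u - τ • v‖) / 2 - 1 ≤ modSmooth X τ := by
  refine le_csSup ⟨|τ|, ?_⟩ ⟨u, v, hu, hv, rfl⟩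
  rintro _ ⟨x, y, hx, hy, rfl⟩
  have hadd := norm_add_le x (τ • y)
  have hsub := norm_sub_le x (τ • y)
  rw [norm_smul, hx, hy, Real.norm_eq_abs] at hadd hsub
  linarith

lemma norm_add_add_norm_sub_le_modSmooth {x h : X} (hx : x ≠ 0) (hh : h ≠ 0) :
    ‖x + h‖ + ‖x - h‖ - 2 * ‖x‖ ≤ 2 * ‖x‖ * modSmooth X (‖h‖ / ‖x‖) := by
  have hx' : ‖x‖ ≠ 0 := norm_ne_zero_iff.mpr hx
  set u := NormedSpace.normalize x
  set v := NormedSpace.normalize h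
  have hxu : ‖x‖ • u = x := NormedSpace.norm_smul_normalize x
  have hhv : ‖x‖ • (‖h‖ / ‖x‖) • v = h := by
    rw [smul_smul, mul_div_cancel₀ _ hx', NormedSpace.norm_smul_normalize]
  have hadd : ‖x + h‖ = ‖x‖ * ‖u + (‖h‖ / ‖x‖) • v‖ := by
    rw [← norm_smul_of_nonneg (norm_nonneg x), smul_add, hxu, hhv]
  have hsub : ‖x - h‖ = ‖x‖ * ‖u - (‖h‖ / ‖x‖) • v‖ := by
    rw [← norm_smul_of_nonneg (norm_nonneg x), smul_sub, hxu, hhv]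
  calc ‖x + h‖ + ‖x - h‖ - 2 * ‖x‖
      = 2 * ‖x‖ * ((‖u + (‖h‖ / ‖x‖) • v‖ + ‖u - (‖h‖ / ‖x‖) • v‖) / 2 - 1) := by
        rw [hadd, hsub]; ring
    _ ≤ 2 * ‖x‖ * modSmooth X (‖h‖ / ‖x‖) := by
        gcongr
        exact le_modSmooth_s19 (NormedSpace.norm_normalize hx) (NormedSpace.norm_normalize hh) _

end Moduli

section DualOfUniformlyConvex

lemma opNorm_le_of_unit_apply_le {E : Type*} [SeminormedAddCommGroup E] [NormedSpace ℝ E]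
    {f : E →L[ℝ] ℝ} {C : ℝ} (hC : 0 ≤ C) (h : ∀ u, ‖u‖ = 1 → f u ≤ C) : ‖f‖ ≤ C := by
  refine f.opNorm_le_of_unit_norm hC fun u hu => abs_le'.mpr ⟨h u hu, ?_⟩
  rw [← map_neg]
  exact h (-u) (by rwa [norm_neg])

lemma opNorm_add_opNorm_le_of_unit_apply_le {E : Type*} [SeminormedAddCommGroup E]
    [NormedSpace ℝ E] {f g : E →L[ℝ] ℝ} {C : ℝ} (hC : 0 ≤ C)
    (h : ∀ u v, ‖u‖ = 1 → ‖v‖ = 1 → f u + g v ≤ C) : ‖f‖ + ‖g‖ ≤ C := by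
  have h_neg : ∀ u v, ‖u‖ = 1 → ‖v‖ = 1 → f u - g v ≤ C ∧ g v - f u ≤ C := fun u v hu hv => by
    have h₁ := h u (-v) hu (by rwa [norm_neg])
    have h₂ := h (-u) v (by rwa [norm_neg]) hv
    rw [map_neg] at h₁ h₂
    constructor <;> linarith
  have hg : ‖g‖ ≤ C := opNorm_le_of_unit_apply_le hC fun v hv => by
    linarith [h v v hv hv, (h_neg v v hv hv).2]
  have hf : ‖f‖ ≤ C - ‖g‖ := opNorm_le_of_unit_apply_le (by linarith) fun u hu => by
    have hgu : ‖g‖ ≤ C - f u := opNorm_le_of_unit_apply_le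
      (by linarith [h u u hu hu, (h_neg u u hu hu).1]) fun v hv => by linarith [h u v hu hv]
    linarith
  linarith

lemma modSmooth_dual_le {ε τ : ℝ} (hε : 0 ≤ ε) (hτ : 0 ≤ τ) (hτε : τ ≤ modConvex X ε) :
    modSmooth (X →L[ℝ] ℝ) τ ≤ τ * ε / 2 := by
  refine Real.sSup_le ?_ (by positivity)
  rintro _ ⟨f, g, hf, hg, rfl⟩
  have hle : ‖f + τ • g‖ + ‖f - τ • g‖ ≤ 2 + τ * ε := by
    refine opNorm_add_opNorm_le_of_unit_apply_le (by positivity) fun u v hu hv => ?_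
    calc (f + τ • g) u + (f - τ • g) v = f (u + v) + τ * g (u - v) := by
          simp only [add_apply, sub_apply, smul_apply, smul_eq_mul, map_add, map_sub]
          ring
      _ ≤ ‖u + v‖ + τ * ‖u - v‖ := by
          gcongr
          · simpa [hf] using (le_abs_self _).trans (f.le_opNorm (u + v))
          · simpa [hg] using (le_abs_self _).trans (g.le_opNorm (u - v))
      _ ≤ 2 + τ * ε := norm_add_add_mul_norm_sub_le hε hτ hτε hu hv
  linarith

lemma UnifConvex.unifSmooth_dual (hX : UnifConvex X) : UnifSmooth (X →L[ℝ] ℝ) := by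
  rw [UnifSmooth, Metric.tendsto_nhds]
  intro η hη
  set ε := min η 2
  have hε : 0 < ε := by positivity
  filter_upwards [Ioo_mem_nhdsGT (hX ε hε (min_le_right _ _))] with τ ⟨hτ, hτε⟩
  have hle : modSmooth (X →L[ℝ] ℝ) τ / τ ≤ ε / 2 := by
    rw [div_le_iff₀ hτ]
    linarith [modSmooth_dual_le hε.le hτ.le hτε.le]
  rw [Real.dist_0_eq_abs, abs_of_nonneg (div_nonneg (modSmooth_nonneg τ) hτ.le)]
  linarith [min_le_left η 2]

end DualOfUniformlyConvex

section Differentiability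

lemma UnifSmooth.isLittleO_modSmooth (hX : UnifSmooth X) :
    modSmooth X =o[𝓝[>] 0] fun τ : ℝ => τ := by
  refine (Asymptotics.isLittleO_iff_tendsto' ?_).mpr hX
  filter_upwards [self_mem_nhdsWithin] with τ hτ h0
  exact absurd h0 (ne_of_gt hτ)

lemma UnifSmooth.isLittleO_norm_add_add_norm_sub (hX : UnifSmooth X) {x : X} (hx : x ≠ 0) :
    (fun h : X => ‖x + h‖ + ‖x - h‖ - 2 * ‖x‖) =o[𝓝 0] fun h => h := by
  have hx' : 0 < ‖x‖ := norm_pos_iff.mpr hx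
  have hscale : Tendsto (fun h : X => ‖h‖ / ‖x‖) (𝓝[≠] 0) (𝓝[>] 0) := by
    refine tendsto_nhdsWithin_iff.mpr ⟨?_, ?_⟩
    · refine Tendsto.mono_left ?_ nhdsWithin_le_nhds
      exact (continuous_norm.div_const ‖x‖).tendsto' 0 0 (by simp)
    · filter_upwards [self_mem_nhdsWithin] with h hh
      exact div_pos (norm_pos_iff.mpr hh) hx'
  have hpunctured :
      (fun h : X => ‖x + h‖ + ‖x - h‖ - 2 * ‖x‖) =o[𝓝[≠] 0] fun h => h := by
    have hscaled : (fun h : X => modSmooth X (‖h‖ / ‖x‖)) =o[𝓝[≠] 0] fun h => h :=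
      (hX.isLittleO_modSmooth.comp_tendsto hscale).trans_isBigO <|
        .of_bound ‖x‖⁻¹ <| .of_forall fun h => by simp [div_eq_inv_mul]
    refine Asymptotics.IsBigO.trans_isLittleO (.of_bound (2 * ‖x‖) ?_) hscaled
    filter_upwards [self_mem_nhdsWithin] with h hh
    rw [Real.norm_of_nonneg (sub_nonneg.mpr (two_mul_norm_le_norm_add_add_norm_sub x h)),
      Real.norm_of_nonneg (modSmooth_nonneg _)]
    exact norm_add_add_norm_sub_le_modSmooth hx hh
  have huniv : insert (0 : X) {0}ᶜ = Set.univ := Set.union_compl_self {0}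
  rw [← nhdsWithin_univ, ← huniv]
  exact (Asymptotics.isLittleO_insert (by simp only [add_zero, sub_zero]; ring)).mpr hpunctured

lemma UnifSmooth.differentiableAt_norm (hX : UnifSmooth X) {x : X} (hx : x ≠ 0) :
    DifferentiableAt ℝ (fun y : X => ‖y‖) x := by
  obtain ⟨φ, hφ, hφx⟩ := exists_dual_vector'' ℝ x
  have hφ_le : ∀ y, φ y ≤ ‖y‖ := fun y =>
    (le_abs_self _).trans (by simpa using φ.le_of_opNorm_le hφ y)
  refine HasFDerivAt.differentiableAt (f' := φ) (hasFDerivAt_iff_isLittleO_nhds_zero.mpr ?_)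
  refine Asymptotics.IsBigO.trans_isLittleO (.of_norm_le fun h => ?_)
    (hX.isLittleO_norm_add_add_norm_sub hx).norm_left
  have hadd := hφ_le (x + h)
  have hsub := hφ_le (x - h)
  rw [map_add, hφx, RCLike.ofReal_real_eq_id, id] at hadd
  rw [map_sub, hφx, RCLike.ofReal_real_eq_id, id] at hsub
  rw [Real.norm_of_nonneg (by linarith)]
  exact le_trans (by linarith) (le_abs_self _)

lemma differentiableAt_norm_rpow_zero {p : ℝ} (hp : 1 < p) :
    DifferentiableAt ℝ (fun y : X => ‖y‖ ^ p) 0 := by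
  have hp0 : p ≠ 0 := by positivity
  have hreal : (fun t : ℝ => t ^ p) =o[𝓝 0] fun t => t := by
    simpa [hasDerivAt_iff_isLittleO_nhds_zero, Real.zero_rpow hp0,
      Real.zero_rpow (sub_ne_zero.mpr hp.ne')] using
      Real.hasDerivAt_rpow_const (x := 0) (Or.inr hp.le)
  refine HasFDerivAt.differentiableAt (f' := 0) (hasFDerivAt_iff_isLittleO_nhds_zero.mpr ?_)
  simpa [Real.zero_rpow hp0, Function.comp_def] using
    (hreal.comp_tendsto (tendsto_norm_zero (E := X))).of_norm_right

lemma UnifSmooth.differentiable_norm_rpow (hX : UnifSmooth X) {p : ℝ} (hp : 1 < p) :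
    Differentiable ℝ fun y : X => 1 / p * ‖y‖ ^ p := fun x => by
  refine DifferentiableAt.const_mul ?_ _
  rcases eq_or_ne x 0 with rfl | hx
  · exact differentiableAt_norm_rpow_zero hp
  · exact (hX.differentiableAt_norm hx).rpow_const (Or.inl (norm_ne_zero_iff.mpr hx))

end Differentiability

section FenchelDuality

variable {E : Type*} [SeminormedAddCommGroup E] [NormedSpace ℝ E] {p q : ℝ}

lemma apply_le_opNorm_mul_infDist {M : Submodule ℝ E} {g : E →L[ℝ] ℝ} (hg : ∀ m ∈ M, g m = 0)
    (x : E) : g x ≤ ‖g‖ * Metric.infDist x (M : Set E) := by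
  rw [Metric.infDist_eq_iInf, Real.mul_iInf_of_nonneg (norm_nonneg g)]
  refine le_ciInf fun m => ?_
  calc g x = g (x - m) := by rw [map_sub, hg m m.2, sub_zero]
    _ ≤ ‖g‖ * dist x m := dist_eq_norm x (m : E) ▸ (le_abs_self _).trans (g.le_opNorm _)

lemma exists_opNorm_le_one_apply_eq_infDist (M : Submodule ℝ E) (x : E) :
    ∃ g : E →L[ℝ] ℝ, ‖g‖ ≤ 1 ∧ (∀ m ∈ M, g m = 0) ∧ g x = Metric.infDist x (M : Set E) := by
  obtain ⟨φ, hφ, hφx⟩ := exists_dual_vector'' ℝ (M.mkQ x)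
  refine ⟨φ.comp M.mkQL, ?_, fun m hm => ?_, ?_⟩
  · refine ContinuousLinearMap.opNorm_le_bound _ zero_le_one fun y => ?_
    exact (φ.le_of_opNorm_le hφ _).trans (by gcongr; exact Submodule.Quotient.norm_mk_le M y)
  · have hm0 : M.mkQ m = 0 := by simpa using hm
    simp [hm0]
  · exact hφx.trans (QuotientAddGroup.norm_mk (S := M.toAddSubgroup) x)

lemma isLeast_norm_rpow_sub_apply_annihilator (hpq : p.HolderConjugate q) (M : Submodule ℝ E)
    (x : E) :
    IsLeast ((fun g : E →L[ℝ] ℝ => 1 / q * ‖g‖ ^ q - g x) '' {g | ∀ m ∈ M, g m = 0})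
      (-(1 / p * Metric.infDist x (M : Set E) ^ p)) := by
  set d := Metric.infDist x (M : Set E)
  have hd : 0 ≤ d := Metric.infDist_nonneg
  have hlower : ∀ g : E →L[ℝ] ℝ, (∀ m ∈ M, g m = 0) →
      -(1 / p * d ^ p) ≤ 1 / q * ‖g‖ ^ q - g x := fun g hg => by
    have hyoung := Real.young_inequality_of_nonneg (norm_nonneg g) hd hpq.symm
    rw [div_eq_inv_mul, div_eq_inv_mul, ← one_div, ← one_div] at hyoung
    linarith [apply_le_opNorm_mul_infDist hg x]
  refine ⟨?_, by rintro _ ⟨g, hg, rfl⟩; exact hlower g hg⟩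
  obtain ⟨φ, hφ, hφM, hφx⟩ := exists_opNorm_le_one_apply_eq_infDist M x
  have hgM : ∀ m ∈ M, (d ^ (p - 1) • φ) m = 0 := fun m hm => by simp [hφM m hm]
  refine ⟨d ^ (p - 1) • φ, hgM, le_antisymm ?_ (hlower _ hgM)⟩
  have hnorm : ‖d ^ (p - 1) • φ‖ ^ q ≤ d ^ p := calc
    ‖d ^ (p - 1) • φ‖ ^ q ≤ (d ^ (p - 1)) ^ q := by
      gcongr
      · exact hpq.symm.nonneg
      · rw [norm_smul, Real.norm_of_nonneg (by positivity)]
        exact mul_le_of_le_one_right (by positivity) hφ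
    _ = d ^ p := by rw [← Real.rpow_mul hd, hpq.sub_one_mul_conj]
  have happly : (d ^ (p - 1) • φ) x = d ^ p := by
    rw [smul_apply, hφx, smul_eq_mul, ← Real.rpow_add_one' hd (by simpa using hpq.ne_zero),
      sub_add_cancel]
  have hq : 1 / q = 1 - 1 / p := by simpa using hpq.one_sub_inv.symm
  calc 1 / q * ‖d ^ (p - 1) • φ‖ ^ q - (d ^ (p - 1) • φ) x
      ≤ 1 / q * d ^ p - d ^ p := by
        rw [happly]
        gcongr
        exact one_div_nonneg.mpr hpq.symm.nonneg
    _ = -(1 / p * d ^ p) := by rw [hq]; ring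

lemma isLeast_norm_rpow_sub_apply (hpq : p.HolderConjugate q) (x : E) :
    IsLeast (Set.range fun g : E →L[ℝ] ℝ => 1 / q * ‖g‖ ^ q - g x) (-(1 / p * ‖x‖ ^ p)) := by
  simpa using isLeast_norm_rpow_sub_apply_annihilator hpq ⊥ x

lemma fenchel_young_inequality (hpq : p.HolderConjugate q) (x : E) (f : E →L[ℝ] ℝ) :
    f x ≤ 1 / p * ‖x‖ ^ p + 1 / q * ‖f‖ ^ q := by
  linarith [(isLeast_norm_rpow_sub_apply hpq x).2 ⟨f, rfl⟩]

end FenchelDuality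

section DualityMap

variable {p q : ℝ}

lemma fderiv_eq_of_forall_sub_le {F : X → ℝ} {φ : X →L[ℝ] ℝ} {x : X} (hF : DifferentiableAt ℝ F x)
    (hmin : ∀ y, F x - φ x ≤ F y - φ y) : fderiv ℝ F x = φ :=
  sub_eq_zero.mp <| IsLocalMin.hasFDerivAt_eq_zero (.of_forall hmin)
    (hF.hasFDerivAt.sub φ.hasFDerivAt)

lemma fenchel_young_equality_dualityMap (hpq : p.HolderConjugate q) {x : X}
    (hx : DifferentiableAt ℝ (fun y : X => 1 / p * ‖y‖ ^ p) x) :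
    dualityMap p x x = 1 / p * ‖x‖ ^ p + 1 / q * ‖dualityMap p x‖ ^ q := by
  obtain ⟨f, hf⟩ := (isLeast_norm_rpow_sub_apply hpq x).1
  have hfx : dualityMap p x = f := fderiv_eq_of_forall_sub_le hx fun y => by
    linarith [fenchel_young_inequality hpq y f]
  rw [hfx]
  linarith

lemma dualityMap_dualityMap (hpq : p.HolderConjugate q) {x : X}
    (hx : DifferentiableAt ℝ (fun y : X => 1 / p * ‖y‖ ^ p) x)
    (hjx : DifferentiableAt ℝ (fun f : X →L[ℝ] ℝ => 1 / q * ‖f‖ ^ q) (dualityMap p x)) :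
    dualityMap q (dualityMap p x) = ContinuousLinearMap.apply ℝ ℝ x :=
  fderiv_eq_of_forall_sub_le hjx fun g => by
    simp only [ContinuousLinearMap.apply_apply]
    linarith [fenchel_young_inequality hpq x g, fenchel_young_equality_dualityMap hpq hx]

lemma bregmanDist_dualityMap (hpq : p.HolderConjugate q) {x : X}
    (hx : DifferentiableAt ℝ (fun y : X => 1 / p * ‖y‖ ^ p) x)
    (hjx : DifferentiableAt ℝ (fun f : X →L[ℝ] ℝ => 1 / q * ‖f‖ ^ q) (dualityMap p x))
    (g : X →L[ℝ] ℝ) :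
    bregmanDist q g (dualityMap p x) = 1 / p * ‖x‖ ^ p + (1 / q * ‖g‖ ^ q - g x) := by
  rw [bregmanDist, dualityMap_dualityMap hpq hx hjx, ContinuousLinearMap.apply_apply, sub_apply,
    fenchel_young_equality_dualityMap hpq hx]
  ring

end DualityMap

lemma bregmanDistSet_eq_of_isLeast {p c : ℝ} {S : Set X} {x : X}
    (h : IsLeast ((fun y => bregmanDist p y x) '' S) c) : bregmanDistSet p S x = c := by
  obtain ⟨⟨y, hyS, hy⟩, hc⟩ := h
  have hexists : ∃ y, y ∈ S ∧ ∀ m ∈ S, bregmanDist p y x ≤ bregmanDist p m x :=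
    ⟨y, hyS, fun m hm => hy.trans_le (hc ⟨m, hm, rfl⟩)⟩
  obtain ⟨hproj, hmin⟩ := Classical.epsilon_spec hexists
  exact le_antisymm ((hmin y hyS).trans_eq hy) (hc ⟨_, hproj, rfl⟩)

theorem statement19_general {p q : ℝ} (hpq : p.HolderConjugate q) {x : X}
    (hx : DifferentiableAt ℝ (fun y : X => 1 / p * ‖y‖ ^ p) x)
    (hjx : DifferentiableAt ℝ (fun f : X →L[ℝ] ℝ => 1 / q * ‖f‖ ^ q) (dualityMap p x))
    (M : Submodule ℝ X) :
    bregmanDistSet q {f : X →L[ℝ] ℝ | ∀ m ∈ M, f m = 0} (dualityMap p x) =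
      1 / p * ‖x‖ ^ p - 1 / p * Metric.infDist x (M : Set X) ^ p := by
  refine bregmanDistSet_eq_of_isLeast ?_
  simp only [bregmanDist_dualityMap hpq hx hjx]
  rw [sub_eq_add_neg, ← Set.image_image (1 / p * ‖x‖ ^ p + ·)]
  exact (add_right_mono (a := 1 / p * ‖x‖ ^ p)).map_isLeast
    (isLeast_norm_rpow_sub_apply_annihilator hpq M x)

theorem statement19 {X : Type*} [NormedAddCommGroup X] [NormedSpace ℝ X] [CompleteSpace X]
    (hconv : UnifConvex X) (hsmooth : UnifSmooth X)
    (p pstar : ℝ) (hp : 1 < p) (hconj : 1 / p + 1 / pstar = 1)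
    (M : Submodule ℝ X) (hM : IsClosed (M : Set X)) (x : X) :
    bregmanDistSet pstar {f : X →L[ℝ] ℝ | ∀ m ∈ M, f m = 0} (dualityMap p x) =
      1 / p * ‖x‖ ^ p - 1 / p * Metric.infDist x (M : Set X) ^ p := by
  have hpq : p.HolderConjugate pstar := Real.holderConjugate_iff.mpr ⟨hp, by simpa using hconj⟩
  exact statement19_general hpq (hsmooth.differentiable_norm_rpow hp x)
    (hconv.unifSmooth_dual.differentiable_norm_rpow hpq.symm.lt _) M
end
end
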